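/- Let Z : LC(ℝ) → ℝ be a simple, τ-upper semicontinuous, translation invariant and dually epi-translation invariant valuation that vanishes on indicator functions of closed intervals, and let u ∈ LC(ℝ) with dom u = [-m,m]. Let x₀ be a point in the interior of dom u at which u is twice differentiable with u''(x₀) = 0. Then for every ρ > 0 and δ > 0 there exist a support triangle T = T(x,y) of u, a convex body S_T ⊂ ℝ², and a function v_T ∈ PLQ(ℝ) such that: (i) (x₀, u(x₀)) ∈ T and 0 < y − x < δ; (ii) S_T ⊂ T and S_T is a support triangle of v_T; (iii) Z(u + I_{[x,y]}) ≤ Z(v_T) + (ρ/2)(y − x). -/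

import Mathlib

open MeasureTheory Filter Topology Pointwise Asymptotics

noncomputable section

variable {E : Type*} [NormedAddCommGroup E] [NormedSpace ℝ E]

/-- The effective domain of an extended-real-valued function. -/
def edom (u : E → EReal) : Set E := {x | u x < ⊤}

/-- `u` has Lipschitz constant `L` on the interior of its domain. -/
def LipBound (u : E → EReal) (L : ℝ) : Prop :=
  ∀ x ∈ interior (edom u), ∀ y ∈ interior (edom u),
    |(u x).toReal - (u y).toReal| ≤ L * ‖x - y‖

/-- Membership in `LC`: proper, lower semicontinuous, convex, compact domain,
Lipschitz on the interior of the domain. -/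
def IsLC (u : E → EReal) : Prop :=
  (∀ x y : E, ∀ t : ℝ, 0 < t → t < 1 →
      u (t • x + (1 - t) • y) ≤ (t : EReal) * u x + ((1 - t : ℝ) : EReal) * u y) ∧
  LowerSemicontinuous u ∧
  (∀ x, u x ≠ ⊥) ∧
  (∃ x, u x ≠ ⊤) ∧
  IsCompact (edom u) ∧
  (∃ L : ℝ, 0 < L ∧ LipBound u L)

/-- τ-convergence: epi-convergence together with uniformly bounded Lipschitz constants. -/
def TauConv (uk : ℕ → E → EReal) (u : E → EReal) : Prop :=
  (∀ k, IsLC (uk k)) ∧ IsLC u ∧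
  (∀ (x : E) (xk : ℕ → E), Tendsto xk atTop (𝓝 x) →
      u x ≤ liminf (fun k => uk k (xk k)) atTop) ∧
  (∀ x : E, ∃ xk : ℕ → E, Tendsto xk atTop (𝓝 x) ∧
      Tendsto (fun k => uk k (xk k)) atTop (𝓝 (u x))) ∧
  (∃ M : ℝ, 0 < M ∧ ∀ k, LipBound (uk k) M)

/-- Valuation property on `LC`. -/
def IsVal (Z : (E → EReal) → ℝ) : Prop :=
  ∀ u v : E → EReal, IsLC u → IsLC v → IsLC (fun x => min (u x) (v x)) →
    Z (fun x => min (u x) (v x)) + Z (fun x => max (u x) (v x)) = Z u + Z v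

/-- τ-upper semicontinuity. -/
def TauUSC (Z : (E → EReal) → ℝ) : Prop :=
  ∀ (uk : ℕ → E → EReal) (u : E → EReal), TauConv uk u →
    limsup (fun k => Z (uk k)) atTop ≤ Z u

/-- τ-continuity. -/
def TauCont (Z : (E → EReal) → ℝ) : Prop :=
  ∀ (uk : ℕ → E → EReal) (u : E → EReal), TauConv uk u →
    Tendsto (fun k => Z (uk k)) atTop (𝓝 (Z u))

/-- Translation invariance. -/
def TransInv (Z : (E → EReal) → ℝ) : Prop :=
  ∀ u : E → EReal, IsLC u → ∀ y : E, Z (fun x => u (x - y)) = Z u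

/-- Dual epi-translation invariance. -/
def DualTransInv (Z : (E → EReal) → ℝ) : Prop :=
  ∀ u : E → EReal, IsLC u → ∀ (l : E →ₗ[ℝ] ℝ) (c : ℝ),
    Z (fun x => u x + ((l x + c : ℝ) : EReal)) = Z u

/-- SL_n invariance. -/
def SLInv (Z : (E → EReal) → ℝ) : Prop :=
  ∀ u : E → EReal, IsLC u → ∀ φ : E →ₗ[ℝ] E, LinearMap.det φ = 1 →
    Z (fun x => u (φ x)) = Z u

/-- The class `Conc`. -/
def IsConc (ζ : ℝ → ℝ) : Prop :=
  (∀ t ∈ Set.Ici (0 : ℝ), 0 ≤ ζ t) ∧ ConcaveOn ℝ (Set.Ici 0) ζ ∧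
  Tendsto ζ (𝓝[>] 0) (𝓝 0) ∧
  Tendsto (fun t => ζ t / t) atTop (𝓝 0)

open Classical in
/-- `(∞-valued) indicator function` of a set. -/
noncomputable def eIndicator (K : Set E) : E → EReal := fun x =>
  if x ∈ K then (0 : EReal) else ⊤

/-- Real part of an extended-real-valued function. -/
def toRealFn (u : E → EReal) : E → ℝ := fun x => (u x).toReal

open Classical in
/-- Second derivative of `u`, set to `0` where `u` is not twice differentiable. -/
noncomputable def secondDeriv (u : ℝ → EReal) : ℝ → ℝ := fun x =>
  if DifferentiableAt ℝ (toRealFn u) x ∧ DifferentiableAt ℝ (deriv (toRealFn u)) x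
  then deriv (deriv (toRealFn u)) x
  else 0

/-- `T` is a support triangle of the convex function `u` with endpoints `(x, u x)` and
`(y, u y)`: the closed triangle bounded by a support line to `u` at `x`, a support line to `u`
at `y`, and the chord joining `(x, u x)` and `(y, u y)`. -/
def IsSupportTriangle (u : ℝ → EReal) (x y : ℝ) (T : Set (ℝ × ℝ)) : Prop :=
  x < y ∧ x ∈ edom u ∧ y ∈ edom u ∧
  ∃ s₁ s₂ c₁ c₂ : ℝ,
    (∀ t ∈ edom u, (u x).toReal + s₁ * (t - x) ≤ (u t).toReal) ∧
    (∀ t ∈ edom u, (u y).toReal + s₂ * (t - y) ≤ (u t).toReal) ∧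
    c₂ = (u x).toReal + s₁ * (c₁ - x) ∧
    c₂ = (u y).toReal + s₂ * (c₁ - y) ∧
    T = convexHull ℝ {((x, (u x).toReal) : ℝ × ℝ), (y, (u y).toReal), (c₁, c₂)}

/-- Membership in `PLQ(ℝ)`: the domain is a finite union of closed intervals on each of which
`u` is a quadratic or affine function. -/
def IsPLQ (u : ℝ → EReal) : Prop :=
  IsLC u ∧
  ∃ (l : ℕ) (a b : Fin (l + 1) → ℝ),
    (∀ i, a i ≤ b i) ∧
    edom u = ⋃ i, Set.Icc (a i) (b i) ∧
    ∀ i, ∃ p q r : ℝ, ∀ x ∈ Set.Icc (a i) (b i),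
      (u x).toReal = p * x ^ 2 + q * x + r

/-! Subtract from `u` its tangent at `x₀`. Because the Taylor remainder is `o(h²)`, the remaining
convex function has Lipschitz constant `o(h)` on `[-h, h]`. If `Z` of this piece exceeded `ρ h` for
arbitrarily small `h`, then about `1 / (ρ h)` translated copies of it could be glued to one convex
function on an interval of fixed length, with Lipschitz constant `o(1)` and with `Z ≥ 1`. As `h → 0`
these functions converge to `0`, where `Z` vanishes, which contradicts upper semicontinuity.
Hence `Z(u + I_[x₀-h,x₀+h]) ≤ ρ h` for all small `h`. On the other hand `Z` vanishes on piecewise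
affine functions, so the maximum of two support lines of `u` serves as `v_T`, with `S_T = T`. -/

open scoped NNReal

section Restriction

variable {X : Type*} {f g : X → ℝ} {A : Set X} {t : X}

/-- The function `f + I_A` in `LC` obtained from a real-valued `f`: it is `f` on `A` and `+∞`
elsewhere. -/
def restrictTop (f : X → ℝ) (A : Set X) : X → EReal := fun t => f t + eIndicator A t

lemma restrictTop_of_mem (ht : t ∈ A) : restrictTop f A t = f t := by
  simp [restrictTop, eIndicator, ht]

lemma restrictTop_of_notMem (ht : t ∉ A) : restrictTop f A t = ⊤ := by
  simp [restrictTop, eIndicator, ht]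

lemma toReal_restrictTop (ht : t ∈ A) : (restrictTop f A t).toReal = f t := by
  rw [restrictTop_of_mem ht, EReal.toReal_coe]

lemma restrictTop_congr (h : Set.EqOn f g A) : restrictTop f A = restrictTop g A := by
  funext t
  by_cases ht : t ∈ A
  · rw [restrictTop_of_mem ht, restrictTop_of_mem ht, h ht]
  · rw [restrictTop_of_notMem ht, restrictTop_of_notMem ht]

variable (f A) in
lemma edom_restrictTop : edom (restrictTop f A) = A := by
  ext t
  by_cases ht : t ∈ A
  · simp [edom, restrictTop_of_mem ht, ht]
  · simp [edom, restrictTop_of_notMem ht, ht]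

variable (f A t) in
lemma restrictTop_ne_bot : restrictTop f A t ≠ ⊥ := by
  by_cases ht : t ∈ A
  · simp [restrictTop_of_mem ht]
  · simp [restrictTop_of_notMem ht]

lemma lowerSemicontinuous_restrictTop [TopologicalSpace X] (hA : IsClosed A)
    (hf : ContinuousOn f A) : LowerSemicontinuous (restrictTop f A) := by
  intro x c hc
  by_cases hx : x ∈ A
  · rw [restrictTop_of_mem hx] at hc
    have hcont : ContinuousWithinAt (fun t => (f t : EReal)) A x :=
      (continuous_coe_real_ereal.tendsto (f x)).comp (hf x hx)
    filter_upwards [mem_nhdsWithin_iff_eventually.1 (hcont.eventually (lt_mem_nhds hc))] with y hy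
    by_cases hyA : y ∈ A
    · rw [restrictTop_of_mem hyA]; exact hy hyA
    · rw [restrictTop_of_notMem hyA]; exact hc.trans (EReal.coe_lt_top _)
  · filter_upwards [hA.isOpen_compl.mem_nhds hx] with y hy
    rwa [restrictTop_of_notMem hy, ← restrictTop_of_notMem hx]

end Restriction

/-- `f` is convex and `K`-Lipschitz on `A`: what `f` must satisfy for `restrictTop f A` to be in
`LC`. -/
structure LipConvexOn (K : ℝ≥0) (f : E → ℝ) (A : Set E) : Prop where
  convexOn : ConvexOn ℝ A f
  lipschitzOnWith : LipschitzOnWith K f A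

/-- `f` agrees on `A` with an affine function, given as in `DualTransInv` by a linear functional
and a constant. -/
def AffineOn (f : E → ℝ) (A : Set E) : Prop :=
  ∃ (l : E →ₗ[ℝ] ℝ) (c : ℝ), ∀ t ∈ A, f t = l t + c

lemma lipBound_restrictTop {V : Type*} [NormedAddCommGroup V] {f : V → ℝ} {A : Set V} {K : ℝ≥0}
    (hf : LipschitzOnWith K f A) : LipBound (restrictTop f A) K := by
  intro x hx y hy
  have hxA := edom_restrictTop f A ▸ interior_subset hx
  have hyA := edom_restrictTop f A ▸ interior_subset hy
  rw [toReal_restrictTop hxA, toReal_restrictTop hyA, ← dist_eq_norm, ← Real.dist_eq]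
  exact hf.dist_le_mul x hxA y hyA

section RestrictionLC

variable {f : E → ℝ} {A : Set E} {K L : ℝ≥0}

lemma restrictTop_smul_add_smul_le (hf : ConvexOn ℝ A f) (x y : E) {t : ℝ} (ht₀ : 0 < t)
    (ht₁ : t < 1) :
    restrictTop f A (t • x + (1 - t) • y) ≤
      (t : EReal) * restrictTop f A x + ((1 - t : ℝ) : EReal) * restrictTop f A y := by
  have ht₁' : 0 < 1 - t := sub_pos.2 ht₁
  by_cases hx : x ∈ A
  · by_cases hy : y ∈ A
    · have hz := hf.1 hx hy ht₀.le ht₁'.le (add_sub_cancel t 1)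
      rw [restrictTop_of_mem hx, restrictTop_of_mem hy, restrictTop_of_mem hz]
      exact_mod_cast hf.2 hx hy ht₀.le ht₁'.le (add_sub_cancel t 1)
    · rw [restrictTop_of_mem hx, restrictTop_of_notMem hy, EReal.coe_mul_top_of_pos ht₁',
        ← EReal.coe_mul, EReal.coe_add_top]
      exact le_top
  · rw [restrictTop_of_notMem hx, EReal.coe_mul_top_of_pos ht₀, EReal.top_add_of_ne_bot]
    · exact le_top
    · by_cases hy : y ∈ A
      · rw [restrictTop_of_mem hy, ← EReal.coe_mul]; exact EReal.coe_ne_bot _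
      · rw [restrictTop_of_notMem hy, EReal.coe_mul_top_of_pos ht₁']; exact top_ne_bot

lemma isLC_restrictTop (hf : LipConvexOn K f A) (hA : IsCompact A) (hne : A.Nonempty) :
    IsLC (restrictTop f A) := by
  refine ⟨fun x y t => restrictTop_smul_add_smul_le hf.convexOn x y,
    lowerSemicontinuous_restrictTop hA.isClosed hf.lipschitzOnWith.continuousOn,
    restrictTop_ne_bot f A, hne.imp fun x hx => ?_, (edom_restrictTop f A).symm ▸ hA,
    (K + 1 : ℝ≥0), by positivity,
    lipBound_restrictTop (hf.lipschitzOnWith.weaken (le_add_of_nonneg_right zero_le_one))⟩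
  rw [restrictTop_of_mem hx]
  exact EReal.coe_ne_top _

lemma tauConv_restrictTop {fk : ℕ → E → ℝ} (hfk : ∀ k, LipConvexOn K (fk k) A)
    (hf : LipConvexOn L f A) (hA : IsCompact A) (hne : A.Nonempty)
    (hlim : ∀ t ∈ A, Tendsto (fun k => fk k t) atTop (𝓝 (f t))) :
    TauConv (fun k => restrictTop (fk k) A) (restrictTop f A) := by
  refine ⟨fun k => isLC_restrictTop (hfk k) hA hne, isLC_restrictTop hf hA hne,
    fun x xk hx => ?_, fun x => ⟨fun _ => x, tendsto_const_nhds, ?_⟩,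
    (K + 1 : ℝ≥0), by positivity, fun k => lipBound_restrictTop
      ((hfk k).lipschitzOnWith.weaken (le_add_of_nonneg_right zero_le_one))⟩
  · by_cases hxA : x ∈ A
    · have hminorant (k : ℕ) : ((fk k x - K * dist x (xk k) : ℝ) : EReal) ≤
          restrictTop (fk k) A (xk k) := by
        by_cases hk : xk k ∈ A
        · rw [restrictTop_of_mem hk, EReal.coe_le_coe_iff, sub_le_iff_le_add]
          exact (hfk k).lipschitzOnWith.le_add_mul hxA hk
        · rw [restrictTop_of_notMem hk]; exact le_top
      have hdist : Tendsto (fun k => fk k x - K * dist x (xk k)) atTop (𝓝 (f x)) := by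
        simpa using (hlim x hxA).sub (((tendsto_const_nhds (x := x)).dist hx).const_mul (K : ℝ))
      rw [restrictTop_of_mem hxA,
        ← ((continuous_coe_real_ereal.tendsto _).comp hdist).liminf_eq]
      exact liminf_le_liminf (Eventually.of_forall hminorant)
    · have htop : ∀ᶠ k in atTop, ⊤ = restrictTop (fk k) A (xk k) :=
        (hx.eventually (hA.isClosed.isOpen_compl.mem_nhds hxA)).mono
          fun k hk => (restrictTop_of_notMem hk).symm
      rw [(tendsto_const_nhds.congr' htop).liminf_eq]
      exact le_top
  · by_cases hxA : x ∈ A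
    · simp only [restrictTop_of_mem hxA]
      exact (continuous_coe_real_ereal.tendsto _).comp (hlim x hxA)
    · simp only [restrictTop_of_notMem hxA]
      exact tendsto_const_nhds

end RestrictionLC

section RealPart

variable {u : E → EReal}

lemma IsLC.coe_toRealFn (hu : IsLC u) {t : E} (ht : t ∈ edom u) : (toRealFn u t : EReal) = u t :=
  EReal.coe_toReal (ne_of_lt ht) (hu.2.2.1 t)

lemma IsLC.convexOn_toRealFn (hu : IsLC u) : ConvexOn ℝ (edom u) (toRealFn u) := by
  have key {x y : E} (hx : x ∈ edom u) (hy : y ∈ edom u) {a b : ℝ} (ha : 0 < a) (hb : 0 < b)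
      (hab : a + b = 1) :
      u (a • x + b • y) ≤ ((a * toRealFn u x + b * toRealFn u y : ℝ) : EReal) := by
    obtain rfl : b = 1 - a := by linarith
    have h := hu.1 x y a ha (by linarith)
    rw [← hu.coe_toRealFn hx, ← hu.coe_toRealFn hy] at h
    exact_mod_cast h
  have hconv : Convex ℝ (edom u) := convex_iff_forall_pos.2 fun x hx y hy a b ha hb hab =>
    (key hx hy ha hb hab).trans_lt (EReal.coe_lt_top _)
  refine convexOn_iff_forall_pos.2 ⟨hconv, fun x hx y hy a b ha hb hab => ?_⟩
  have h := key hx hy ha hb hab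
  rw [← hu.coe_toRealFn (hconv hx hy ha.le hb.le hab)] at h
  exact_mod_cast h

lemma IsLC.add_eIndicator (hu : IsLC u) {A : Set E} (hA : A ⊆ edom u) :
    (fun t => u t + eIndicator A t) = restrictTop (toRealFn u) A := by
  funext t
  by_cases ht : t ∈ A
  · rw [restrictTop, hu.coe_toRealFn (hA ht)]
  · rw [restrictTop_of_notMem ht, eIndicator, if_neg ht, EReal.add_top_of_ne_bot (hu.2.2.1 t)]

end RealPart

namespace LipConvexOn

variable {f g : E → ℝ} {A B : Set E} {K L : ℝ≥0}

lemma mono (hf : LipConvexOn K f B) (hAB : A ⊆ B) (hA : Convex ℝ A) : LipConvexOn K f A :=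
  ⟨hf.1.subset hAB hA, hf.2.mono hAB⟩

lemma weaken (hf : LipConvexOn K f A) (hKL : K ≤ L) : LipConvexOn L f A :=
  ⟨hf.1, hf.2.weaken hKL⟩

lemma add (hf : LipConvexOn K f A) (hg : LipConvexOn L g A) : LipConvexOn (K + L) (f + g) A :=
  ⟨hf.1.add hg.1, hf.2.add hg.2⟩

lemma const (hA : Convex ℝ A) (c : ℝ) : LipConvexOn 0 (fun _ => c) A :=
  ⟨convexOn_const c hA, (LipschitzWith.const c).lipschitzOnWith⟩

lemma comp_sub_univ (hf : LipConvexOn K f Set.univ) (c : E) :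
    LipConvexOn K (fun t => f (t - c)) Set.univ := by
  refine ⟨?_, ?_⟩
  · simpa [sub_eq_add_neg, Function.comp_def] using hf.convexOn.translate_left (-c)
  · simpa [LipschitzOnWith] using fun x y =>
      hf.lipschitzOnWith (Set.mem_univ (x - c)) (Set.mem_univ (y - c))

end LipConvexOn

namespace AffineOn

variable {f g : E → ℝ} {A B : Set E}

lemma mono (hf : AffineOn f B) (hAB : A ⊆ B) : AffineOn f A :=
  let ⟨l, c, h⟩ := hf
  ⟨l, c, fun t ht => h t (hAB ht)⟩

lemma add (hf : AffineOn f A) (hg : AffineOn g A) : AffineOn (f + g) A := by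
  obtain ⟨l, c, hf⟩ := hf
  obtain ⟨l', c', hg⟩ := hg
  exact ⟨l + l', c + c', fun t ht => by
    simp only [Pi.add_apply, hf t ht, hg t ht, LinearMap.add_apply]; ring⟩

lemma const (c : ℝ) (A : Set E) : AffineOn (fun _ => c) A :=
  ⟨0, c, fun t _ => by simp⟩

lemma comp_sub (hf : AffineOn f A) (c : E) :
    AffineOn (fun t => f (t - c)) ((fun t => t - c) ⁻¹' A) := by
  obtain ⟨l, d, hf⟩ := hf
  exact ⟨l, d - l c, fun t ht => (hf _ ht).trans (by rw [map_sub]; ring)⟩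

lemma of_eq_mul_add {f : ℝ → ℝ} {A : Set ℝ} (p q : ℝ) (h : ∀ t ∈ A, f t = p * t + q) :
    AffineOn f A :=
  ⟨p • LinearMap.id, q, h⟩

end AffineOn

section Extension

variable {f : ℝ → ℝ} {a b s t : ℝ} {K : ℝ≥0}

/-- The extension of `f` from `[a, b]` to `ℝ` with slope `-K` to the left of `a` and slope `K` to
the right of `b`. Pieces on adjacent intervals are glued by adding their extensions. -/
def lipExtend (hab : a ≤ b) (K : ℝ≥0) (f : ℝ → ℝ) (t : ℝ) : ℝ :=
  f (Set.projIcc a b hab t) + K * |t - Set.projIcc a b hab t|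

lemma lipExtend_eqOn (hab : a ≤ b) : Set.EqOn (lipExtend hab K f) f (Set.Icc a b) := fun t ht => by
  simp [lipExtend, Set.projIcc_of_mem hab ht]

lemma restrictTop_lipExtend_Icc (hab : a ≤ b) :
    restrictTop (lipExtend hab K f) (Set.Icc a b) = restrictTop f (Set.Icc a b) :=
  restrictTop_congr (lipExtend_eqOn hab)

lemma affineOn_lipExtend_Iic (hab : a ≤ b) : AffineOn (lipExtend hab K f) (Set.Iic a) :=
  .of_eq_mul_add (-K) (f a + K * a) fun t ht => by
    rw [lipExtend, Set.projIcc_of_le_left hab ht, abs_of_nonpos (sub_nonpos.2 ht)]; ring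

lemma affineOn_lipExtend_Ici (hab : a ≤ b) : AffineOn (lipExtend hab K f) (Set.Ici b) :=
  .of_eq_mul_add K (f b - K * b) fun t ht => by
    rw [lipExtend, Set.projIcc_of_right_le hab ht, abs_of_nonneg (sub_nonneg.2 ht)]; ring

lemma abs_sub_projIcc_add_abs_projIcc_sub (hab : a ≤ b) (hs : s ∈ Set.Icc a b) (t : ℝ) :
    |t - Set.projIcc a b hab t| + |Set.projIcc a b hab t - s| = |t - s| := by
  rcases le_total t a with hta | hat
  · rw [Set.projIcc_of_le_left hab hta, abs_of_nonpos (sub_nonpos.2 hta),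
      abs_of_nonpos (sub_nonpos.2 hs.1), abs_of_nonpos (sub_nonpos.2 (hta.trans hs.1))]
    ring
  rcases le_total b t with hbt | htb
  · rw [Set.projIcc_of_right_le hab hbt, abs_of_nonneg (sub_nonneg.2 hbt),
      abs_of_nonneg (sub_nonneg.2 hs.2), abs_of_nonneg (sub_nonneg.2 (hs.2.trans hbt))]
    ring
  · simp [Set.projIcc_of_mem hab ⟨hat, htb⟩]

lemma lipExtend_le (hab : a ≤ b) (hf : LipschitzOnWith K f (Set.Icc a b)) (hs : s ∈ Set.Icc a b)
    (t : ℝ) : lipExtend hab K f t ≤ f s + K * |t - s| := by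
  have hproj := hf.le_add_mul (Set.projIcc a b hab t).2 hs
  rw [Real.dist_eq] at hproj
  rw [lipExtend, ← abs_sub_projIcc_add_abs_projIcc_sub hab hs t]
  linarith

lemma lipConvexOn_lipExtend (hab : a ≤ b) (hf : LipConvexOn K f (Set.Icc a b)) :
    LipConvexOn K (lipExtend hab K f) Set.univ := by
  refine ⟨⟨convex_univ, fun x _ y _ α β hα hβ hαβ => ?_⟩,
    (LipschitzWith.of_le_add_mul K fun x y => ?_).lipschitzOnWith⟩
  · set p := Set.projIcc a b hab x with hp
    set q := Set.projIcc a b hab y with hq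
    calc lipExtend hab K f (α • x + β • y)
      _ ≤ f (α • (p : ℝ) + β • (q : ℝ)) + K * |α • x + β • y - (α • (p : ℝ) + β • (q : ℝ))| :=
        lipExtend_le hab hf.lipschitzOnWith (hf.convexOn.1 p.2 q.2 hα hβ hαβ) _
      _ ≤ α * f p + β * f q + K * (α * |x - p| + β * |y - q|) := by
        gcongr
        · exact hf.convexOn.2 p.2 q.2 hα hβ hαβ
        · calc |α • x + β • y - (α • (p : ℝ) + β • (q : ℝ))|
            _ = |α * (x - p) + β * (y - q)| := by simp only [smul_eq_mul]; ring_nf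
            _ ≤ α * |x - p| + β * |y - q| := by
              grw [abs_add_le, abs_mul, abs_mul, abs_of_nonneg hα, abs_of_nonneg hβ]
      _ = α • lipExtend hab K f x + β • lipExtend hab K f y := by
        simp only [lipExtend, hp, hq, smul_eq_mul]; ring
  · calc lipExtend hab K f x
      _ ≤ f (Set.projIcc a b hab y) + K * |x - Set.projIcc a b hab y| :=
        lipExtend_le hab hf.lipschitzOnWith (Subtype.prop _) x
      _ ≤ f (Set.projIcc a b hab y) + K * (|x - y| + |y - Set.projIcc a b hab y|) := by
        gcongr
        exact abs_sub_le ..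
      _ = lipExtend hab K f y + K * dist x y := by
        rw [lipExtend, Real.dist_eq]; ring

end Extension

section Valuation

variable {f g : E → ℝ} {A B : Set E} {K : ℝ≥0} {Z : (E → EReal) → ℝ}

lemma IsVal.restrictTop_union_add_inter (hZ : IsVal Z) (hf : LipConvexOn K f (A ∪ B))
    (hA : IsCompact A) (hB : IsCompact B) (hAc : Convex ℝ A) (hBc : Convex ℝ B) (hA₀ : A.Nonempty)
    (hB₀ : B.Nonempty) :
    Z (restrictTop f (A ∪ B)) + Z (restrictTop f (A ∩ B)) =
      Z (restrictTop f A) + Z (restrictTop f B) := by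
  have hmin : (fun t => min (restrictTop f A t) (restrictTop f B t)) = restrictTop f (A ∪ B) := by
    funext t
    by_cases htA : t ∈ A <;> by_cases htB : t ∈ B <;> simp [restrictTop, eIndicator, htA, htB]
  have hmax : (fun t => max (restrictTop f A t) (restrictTop f B t)) = restrictTop f (A ∩ B) := by
    funext t
    by_cases htA : t ∈ A <;> by_cases htB : t ∈ B <;> simp [restrictTop, eIndicator, htA, htB]
  have h := hZ (restrictTop f A) (restrictTop f B)
    (isLC_restrictTop (hf.mono Set.subset_union_left hAc) hA hA₀)
    (isLC_restrictTop (hf.mono Set.subset_union_right hBc) hB hB₀)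
    (hmin ▸ isLC_restrictTop hf (hA.union hB) hA₀.inl)
  rwa [hmin, hmax] at h

lemma DualTransInv.restrictTop_add (hZ : DualTransInv Z) (hf : IsLC (restrictTop f A))
    (hg : AffineOn g A) : Z (restrictTop (f + g) A) = Z (restrictTop f A) := by
  obtain ⟨l, c, hg⟩ := hg
  rw [← hZ _ hf l c]
  congr 1
  funext t
  by_cases ht : t ∈ A
  · rw [restrictTop_of_mem ht, restrictTop_of_mem ht, Pi.add_apply, hg t ht, EReal.coe_add]
  · rw [restrictTop_of_notMem ht, restrictTop_of_notMem ht, EReal.top_add_coe]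

lemma TransInv.restrictTop_comp_sub (hZ : TransInv Z) (hf : IsLC (restrictTop f A)) (c : E) :
    Z (restrictTop (fun t => f (t - c)) ((fun t => t - c) ⁻¹' A)) = Z (restrictTop f A) :=
  hZ _ hf c

/-- A real `limsup` is `0` when the sequence is unbounded above, so `TauUSC` gives
`c ≤ Z u` only once this case has been excluded. -/
lemma TauUSC.le_of_forall_le (hZ : TauUSC Z) {uk : ℕ → E → EReal} {u : E → EReal} {c : ℝ}
    (hu : TauConv uk u) (hc : ∀ k, c ≤ Z (uk k))
    (hbdd : BddAbove (Set.range fun k => Z (uk k)) ∨ Z u < 0) : c ≤ Z u := by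
  have husc : limsup (fun k => Z (uk k)) atTop ≤ Z u := hZ _ _ hu
  by_cases hb : IsBoundedUnder (· ≤ ·) atTop fun k => Z (uk k)
  · exact (le_limsup_of_frequently_le (Frequently.of_forall hc) hb).trans husc
  · rw [Real.limsup_of_not_isBoundedUnder hb] at husc
    exact absurd (hbdd.resolve_left fun h => hb h.isBoundedUnder_of_range) husc.not_gt

end Valuation

/-- A valuation as in the theorem, apart from upper semicontinuity: simple, translation and dually
epi-translation invariant, and zero on indicator functions of intervals. -/
structure IsSimpleInvariantVal (Z : (ℝ → EReal) → ℝ) : Prop where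
  isVal : IsVal Z
  transInv : TransInv Z
  dualTransInv : DualTransInv Z
  eq_zero_of_edom_eq_singleton : ∀ u : ℝ → EReal, IsLC u → (∃ x : ℝ, edom u = {x}) → Z u = 0
  eIndicator_Icc : ∀ a b : ℝ, a ≤ b → Z (eIndicator (Set.Icc a b)) = 0

namespace IsSimpleInvariantVal

variable {Z : (ℝ → EReal) → ℝ} {f g : ℝ → ℝ} {a b c : ℝ} {K L : ℝ≥0}

lemma restrictTop_Icc_add_Icc (hZ : IsSimpleInvariantVal Z) (hf : LipConvexOn K f (Set.Icc a c))
    (hab : a ≤ b) (hbc : b ≤ c) :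
    Z (restrictTop f (Set.Icc a b)) + Z (restrictTop f (Set.Icc b c)) =
      Z (restrictTop f (Set.Icc a c)) := by
  have hunion : Set.Icc a b ∪ Set.Icc b c = Set.Icc a c := Set.Icc_union_Icc_eq_Icc hab hbc
  have hinter : Set.Icc a b ∩ Set.Icc b c = {b} := Set.Icc_inter_Icc_eq_singleton hab hbc
  have hsingleton : Z (restrictTop f {b}) = 0 := by
    refine hZ.eq_zero_of_edom_eq_singleton _ ?_ ⟨b, edom_restrictTop f {b}⟩
    exact isLC_restrictTop
      (hf.mono (Set.singleton_subset_iff.2 ⟨hab, hbc⟩) (convex_singleton b))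
      isCompact_singleton (Set.singleton_nonempty b)
  rw [← hZ.isVal.restrictTop_union_add_inter (hunion ▸ hf) isCompact_Icc isCompact_Icc
    (convex_Icc a b) (convex_Icc b c) (Set.nonempty_Icc.2 hab) (Set.nonempty_Icc.2 hbc), hunion,
    hinter, hsingleton, add_zero]

lemma restrictTop_Icc_mono (hZ : IsSimpleInvariantVal Z) {a' b' : ℝ}
    (hf : LipConvexOn K f (Set.Icc a' b')) (ha : a' ≤ a) (hab : a ≤ b) (hb : b ≤ b')
    (hnonneg : ∀ x y, x ≤ y → LipConvexOn K f (Set.Icc x y) → 0 ≤ Z (restrictTop f (Set.Icc x y))) :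
    Z (restrictTop f (Set.Icc a b)) ≤ Z (restrictTop f (Set.Icc a' b')) := by
  have hright : LipConvexOn K f (Set.Icc a b') :=
    hf.mono (Set.Icc_subset_Icc_left ha) (convex_Icc a b')
  have hsplit_left := hZ.restrictTop_Icc_add_Icc hf ha (hab.trans hb)
  have hsplit_right := hZ.restrictTop_Icc_add_Icc hright hab hb
  have hnonneg_left :=
    hnonneg a' a ha (hf.mono (Set.Icc_subset_Icc_right (hab.trans hb)) (convex_Icc a' a))
  have hnonneg_right :=
    hnonneg b b' hb (hright.mono (Set.Icc_subset_Icc_left hab) (convex_Icc b b'))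
  linarith

lemma restrictTop_Icc_of_affineOn (hZ : IsSimpleInvariantVal Z) (hab : a ≤ b)
    (hf : AffineOn f (Set.Icc a b)) : Z (restrictTop f (Set.Icc a b)) = 0 := by
  have hzero : restrictTop (fun _ : ℝ => 0) (Set.Icc a b) = eIndicator (Set.Icc a b) := by
    funext t
    simp [restrictTop]
  have hLC := isLC_restrictTop (LipConvexOn.const (convex_Icc a b) 0) isCompact_Icc
    (Set.nonempty_Icc.2 hab)
  have h := hZ.dualTransInv.restrictTop_add hLC hf
  rwa [hzero, hZ.eIndicator_Icc a b hab, show (fun _ : ℝ => (0 : ℝ)) + f = f from zero_add f] at h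

lemma restrictTop_Icc_comp_sub (hZ : IsSimpleInvariantVal Z) (hab : a ≤ b)
    (hf : LipConvexOn K f (Set.Icc a b)) (c : ℝ) :
    Z (restrictTop (fun t => f (t - c)) (Set.Icc (a + c) (b + c))) =
      Z (restrictTop f (Set.Icc a b)) := by
  rw [← Set.preimage_sub_const_Icc]
  exact hZ.transInv.restrictTop_comp_sub
    (isLC_restrictTop hf isCompact_Icc (Set.nonempty_Icc.2 hab)) c

/-- On each side of `b` one of the two summands is affine, hence invisible to `Z`. -/
lemma restrictTop_add_Icc (hZ : IsSimpleInvariantVal Z) (hf : LipConvexOn K f Set.univ)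
    (hg : LipConvexOn L g Set.univ) (hfb : AffineOn f (Set.Ici b)) (hgb : AffineOn g (Set.Iic b))
    (hab : a ≤ b) (hbc : b ≤ c) :
    Z (restrictTop (f + g) (Set.Icc a c)) =
      Z (restrictTop f (Set.Icc a b)) + Z (restrictTop g (Set.Icc b c)) := by
  have hleft : Z (restrictTop (f + g) (Set.Icc a b)) = Z (restrictTop f (Set.Icc a b)) :=
    hZ.dualTransInv.restrictTop_add
      (isLC_restrictTop (hf.mono (Set.subset_univ _) (convex_Icc a b)) isCompact_Icc
        (Set.nonempty_Icc.2 hab))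
      (hgb.mono Set.Icc_subset_Iic_self)
  have hright : Z (restrictTop (f + g) (Set.Icc b c)) = Z (restrictTop g (Set.Icc b c)) := by
    rw [add_comm f g]
    exact hZ.dualTransInv.restrictTop_add
      (isLC_restrictTop (hg.mono (Set.subset_univ _) (convex_Icc b c)) isCompact_Icc
        (Set.nonempty_Icc.2 hbc))
      (hfb.mono Set.Icc_subset_Ici_self)
  rw [← hleft, ← hright]
  exact (hZ.restrictTop_Icc_add_Icc ((hf.add hg).mono (Set.subset_univ _) (convex_Icc a c)) hab
    hbc).symm

lemma restrictTop_add_comp_sub_Icc (hZ : IsSimpleInvariantVal Z) {a' c' s : ℝ}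
    (hf : LipConvexOn K f Set.univ) (hg : LipConvexOn L g Set.univ) (hfb : AffineOn f (Set.Ici b))
    (hga : AffineOn g (Set.Iic a')) (hab : a ≤ b) (hac : a' ≤ c') (hs : a' + s = b) :
    Z (restrictTop (f + fun t => g (t - s)) (Set.Icc a (c' + s))) =
      Z (restrictTop f (Set.Icc a b)) + Z (restrictTop g (Set.Icc a' c')) := by
  have hg_left : AffineOn (fun t => g (t - s)) (Set.Iic b) := by
    simpa only [Set.preimage_sub_const_Iic, hs] using hga.comp_sub s
  rw [hZ.restrictTop_add_Icc hf (hg.comp_sub_univ s) hfb hg_left hab (by linarith),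
    ← hZ.restrictTop_Icc_comp_sub hac (hg.mono (Set.subset_univ _) (convex_Icc a' c')) s, hs]

lemma exists_copies (hZ : IsSimpleInvariantVal Z) (hab : a ≤ b)
    (hf : LipConvexOn K f (Set.Icc a b)) (n : ℕ) :
    ∃ G : ℝ → ℝ, LipConvexOn (n * K) G Set.univ ∧ AffineOn G (Set.Iic 0) ∧
      AffineOn G (Set.Ici (n * (b - a))) ∧
      Z (restrictTop G (Set.Icc 0 (n * (b - a)))) = n * Z (restrictTop f (Set.Icc a b)) := by
  induction n with
  | zero =>
    refine ⟨fun _ => 0, by simpa using LipConvexOn.const convex_univ 0, .const 0 _, .const 0 _, ?_⟩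
    rw [hZ.restrictTop_Icc_of_affineOn (by simp) (.const 0 _), Nat.cast_zero, zero_mul]
  | succ n ih =>
    obtain ⟨G, hG, hG_left, hG_right, hZG⟩ := ih
    set c : ℝ := n * (b - a) with hc
    have hc₀ : 0 ≤ c := mul_nonneg n.cast_nonneg (sub_nonneg.2 hab)
    have hac : a + (c - a) = c := by ring
    have hc_le : c ≤ b + (c - a) := by linarith
    have hc_succ : (n + 1 : ℕ) * (b - a) = b + (c - a) := by rw [hc]; push_cast; ring
    have hφ := lipConvexOn_lipExtend hab hf
    have hφ_left : AffineOn (fun t => lipExtend hab K f (t - (c - a))) (Set.Iic c) := by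
      simpa only [Set.preimage_sub_const_Iic, hac] using
        (affineOn_lipExtend_Iic (f := f) (K := K) hab).comp_sub (c - a)
    have hφ_right :
        AffineOn (fun t => lipExtend hab K f (t - (c - a))) (Set.Ici (b + (c - a))) := by
      simpa only [Set.preimage_sub_const_Ici] using
        (affineOn_lipExtend_Ici (f := f) (K := K) hab).comp_sub (c - a)
    refine ⟨G + fun t => lipExtend hab K f (t - (c - a)), ?_,
      hG_left.add (hφ_left.mono (Set.Iic_subset_Iic.2 hc₀)), ?_, ?_⟩
    · simpa only [Nat.cast_succ, add_mul, one_mul] using hG.add (hφ.comp_sub_univ (c - a))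
    · rw [hc_succ]
      exact (hG_right.mono (Set.Ici_subset_Ici.2 hc_le)).add hφ_right
    · rw [hc_succ, hZ.restrictTop_add_comp_sub_Icc hG hφ hG_right (affineOn_lipExtend_Iic hab) hc₀
        hab hac, hZG, restrictTop_lipExtend_Icc]
      push_cast
      ring

lemma exists_copies_one_le (hZ : IsSimpleInvariantVal Z) {ρ : ℝ} (hρ : 0 < ρ) (hab : a < b)
    (hba : b - a ≤ 1) (hf : LipConvexOn K f (Set.Icc a b))
    (hlarge : ρ * (b - a) < Z (restrictTop f (Set.Icc a b))) :
    ∃ (n : ℕ) (G : ℝ → ℝ), n * (b - a) ≤ 1 / ρ + 1 ∧ LipConvexOn (n * K) G Set.univ ∧ G 0 = 0 ∧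
      AffineOn G (Set.Iic 0) ∧ 1 ≤ Z (restrictTop G (Set.Icc 0 (1 / ρ + 1))) ∧
      Z (restrictTop G (Set.Icc 0 (1 / ρ + 1))) ≤ 1 + Z (restrictTop f (Set.Icc a b)) := by
  set F := Z (restrictTop f (Set.Icc a b))
  have hba₀ : 0 < b - a := sub_pos.2 hab
  have hF : 0 < F := (mul_pos hρ hba₀).trans hlarge
  set n := ⌈1 / F⌉₊
  have hn_ge : 1 ≤ n * F := (div_le_iff₀ hF).1 (Nat.le_ceil _)
  have hn_lt : n < 1 / F + 1 := Nat.ceil_lt_add_one (by positivity)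
  have hn_le : n * F ≤ 1 + F := by
    calc n * F ≤ (1 / F + 1) * F := by gcongr
      _ = 1 + F := by field_simp
  have hlength : n * (b - a) ≤ 1 / ρ + 1 := by
    calc n * (b - a) ≤ (1 / (ρ * (b - a)) + 1) * (b - a) := by
          grw [hn_lt, hlarge]
      _ = 1 / ρ + (b - a) := by field_simp
      _ ≤ 1 / ρ + 1 := by gcongr
  obtain ⟨G, hG, hG_left, hG_right, hZG⟩ := hZ.exists_copies hab.le hf n
  have hZG' : Z (restrictTop G (Set.Icc 0 (1 / ρ + 1))) = n * F := by
    rw [← hZ.restrictTop_Icc_add_Icc (hG.mono (Set.subset_univ _) (convex_Icc _ _))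
      (by positivity) hlength, hZG,
      hZ.restrictTop_Icc_of_affineOn hlength (hG_right.mono Set.Icc_subset_Ici_self), add_zero]
  have hZ_sub : Z (restrictTop (G + fun _ => -G 0) (Set.Icc 0 (1 / ρ + 1))) = n * F := by
    rw [hZ.dualTransInv.restrictTop_add (isLC_restrictTop (hG.mono (Set.subset_univ _)
      (convex_Icc _ _)) isCompact_Icc (Set.nonempty_Icc.2 (by positivity))) (.const _ _), hZG']
  refine ⟨n, G + fun _ => -G 0, hlength, ?_, by simp, hG_left.add (.const _ _),
    hZ_sub ▸ hn_ge, hZ_sub ▸ hn_le⟩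
  simpa only [add_zero] using hG.add (LipConvexOn.const convex_univ (-G 0))

/-- Each `G k` is glued to the right of `B`; the glued functions converge to `B`, so upper
semicontinuity compares `Z B + c` with `Z B`. -/
lemma le_zero_of_tendsto_zero (hZ : IsSimpleInvariantVal Z) (husc : TauUSC Z) {D : ℝ} (hD : 0 ≤ D)
    {G : ℕ → ℝ → ℝ} (hG : ∀ k, LipConvexOn K (G k) Set.univ)
    (hG_left : ∀ k, AffineOn (G k) (Set.Iic 0)) (hlim : ∀ t, Tendsto (G · t) atTop (𝓝 0))
    (hc : ∀ k, c ≤ Z (restrictTop (G k) (Set.Icc 0 D))) {B : ℝ → ℝ} (hab : a ≤ b)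
    (hB : LipConvexOn L B (Set.Icc a b))
    (hbdd : BddAbove (Set.range fun k => Z (restrictTop (G k) (Set.Icc 0 D))) ∨
      Z (restrictTop B (Set.Icc a b)) < 0) : c ≤ 0 := by
  set B' := lipExtend hab L B
  have hB' : LipConvexOn L B' Set.univ := lipConvexOn_lipExtend hab hB
  have hB'_right : AffineOn B' (Set.Ici b) := affineOn_lipExtend_Ici hab
  have hbD : b ≤ D + b := le_add_of_nonneg_left hD
  have hZB' : Z (restrictTop B' (Set.Icc a (D + b))) = Z (restrictTop B (Set.Icc a b)) := by
    rw [← hZ.restrictTop_Icc_add_Icc (hB'.mono (Set.subset_univ _) (convex_Icc _ _)) hab hbD,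
      restrictTop_lipExtend_Icc, hZ.restrictTop_Icc_of_affineOn hbD
        (hB'_right.mono Set.Icc_subset_Ici_self), add_zero]
  have hZglue (k : ℕ) :
      Z (restrictTop (B' + fun t => G k (t - b)) (Set.Icc a (D + b))) =
        Z (restrictTop B (Set.Icc a b)) + Z (restrictTop (G k) (Set.Icc 0 D)) := by
    rw [hZ.restrictTop_add_comp_sub_Icc hB' (hG k) hB'_right (hG_left k) hab hD (zero_add b),
      restrictTop_lipExtend_Icc]
  have hconv : TauConv
      (fun k => restrictTop (B' + fun t => G k (t - b)) (Set.Icc a (D + b)))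
      (restrictTop B' (Set.Icc a (D + b))) :=
    tauConv_restrictTop
      (fun k => (hB'.add ((hG k).comp_sub_univ _)).mono (Set.subset_univ _) (convex_Icc _ _))
      (hB'.mono (Set.subset_univ _) (convex_Icc _ _)) isCompact_Icc
      (Set.nonempty_Icc.2 (hab.trans hbD))
      fun t _ => by simpa using (hlim (t - b)).const_add (B' t)
  have hle := husc.le_of_forall_le (c := Z (restrictTop B (Set.Icc a b)) + c) hconv
    (fun k => by rw [hZglue]; gcongr; exact hc k)
  simp only [hZglue, hZB', add_le_iff_nonpos_right] at hle
  refine hle (hbdd.imp_left fun ⟨C, hC⟩ => ⟨Z (restrictTop B (Set.Icc a b)) + C, ?_⟩)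
  exact Set.forall_mem_range.2 fun k => by gcongr; exact hC ⟨k, rfl⟩

end IsSimpleInvariantVal

section SmallLipschitz

variable {g : ℝ → ℝ}

lemma eventually_lipConvexOn_of_isLittleO_sq {s : Set ℝ} (hs : s ∈ 𝓝 0) (hg : ConvexOn ℝ s g)
    (ho : g =o[𝓝 0] fun t => t ^ 2) {ε : ℝ} (hε : 0 < ε) :
    ∀ᶠ h in 𝓝[>] 0, LipConvexOn (ε * h).toNNReal g (Set.Icc (-h) h) := by
  obtain ⟨r, hr, hball⟩ := Metric.mem_nhds_iff.1
    (inter_mem hs (ho.def (show 0 < ε / 18 by positivity)))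
  filter_upwards [Ioo_mem_nhdsGT (show 0 < r / 3 by positivity)] with h ⟨hh, hhr⟩
  have hsub : Metric.ball (0 : ℝ) (3 * h) ⊆ Metric.ball 0 r := Metric.ball_subset_ball (by linarith)
  have hIcc : Set.Icc (-h) h ⊆ Metric.ball 0 (3 * h - h) := by
    rw [Real.ball_eq_Ioo]
    exact Set.Icc_subset_Ioo (by linarith) (by linarith)
  have hconv : ConvexOn ℝ (Metric.ball 0 (3 * h)) g :=
    hg.subset (fun t ht => (hball (hsub ht)).1) (convex_ball _ _)
  have hbound (t : ℝ) (ht : dist t 0 < 3 * h) : |g t| ≤ ε / 18 * (3 * h) ^ 2 := by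
    have hgt : |g t| ≤ ε / 18 * |t ^ 2| := (hball (hsub ht)).2
    rw [dist_zero_right, Real.norm_eq_abs] at ht
    rw [abs_pow] at hgt
    grw [hgt, ht]
  have hlip := hconv.lipschitzOnWith_of_abs_le hh hbound
  rw [show 2 * (ε / 18 * (3 * h) ^ 2) / h = ε * h by field_simp; ring] at hlip
  exact ⟨hconv.subset (hIcc.trans (Metric.ball_subset_ball (by linarith))) (convex_Icc _ _),
    hlip.mono hIcc⟩

variable {Z : (ℝ → EReal) → ℝ} {ρ : ℝ}

lemma IsSimpleInvariantVal.exists_one_le_of_frequently (hZ : IsSimpleInvariantVal Z) (hρ : 0 < ρ)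
    (hg : ∀ ε > 0, ∀ᶠ h in 𝓝[>] 0, LipConvexOn (ε * h).toNNReal g (Set.Icc (-h) h))
    (hlarge : ∃ᶠ h in 𝓝[>] 0, ρ * (2 * h) < Z (restrictTop g (Set.Icc (-h) h)))
    {r : ℝ} (hr : 0 < r) {η : ℝ} (hη : 0 < η) :
    ∃ h ∈ Set.Ioo 0 r, ∃ G : ℝ → ℝ, LipConvexOn η.toNNReal G Set.univ ∧ G 0 = 0 ∧
      AffineOn G (Set.Iic 0) ∧ 1 ≤ Z (restrictTop G (Set.Icc 0 (1 / ρ + 1))) ∧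
      Z (restrictTop G (Set.Icc 0 (1 / ρ + 1))) ≤ 1 + Z (restrictTop g (Set.Icc (-h) h)) := by
  set ε := 2 * η / (1 / ρ + 1) with hε
  obtain ⟨h, hlarge, hlip, hh, hhr⟩ := (hlarge.and_eventually ((hg ε (by positivity)).and
    (Ioo_mem_nhdsGT (show 0 < min r (1 / 2) by positivity)))).exists
  have hlength : h - -h = 2 * h := by ring
  obtain ⟨hhr, hh1⟩ := lt_min_iff.1 hhr
  obtain ⟨n, G, hn, hG, hG₀, hG_left, hZG⟩ := hZ.exists_copies_one_le hρ (by linarith)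
    (by linarith) hlip (hlength ▸ hlarge)
  refine ⟨h, ⟨hh, hhr⟩, G, hG.weaken ?_, hG₀, hG_left, hZG⟩
  rw [Real.le_toNNReal_iff_coe_le hη.le]
  push_cast
  rw [Real.coe_toNNReal _ (by positivity)]
  calc n * (ε * h) = ε / 2 * (n * (h - -h)) := by ring
    _ ≤ ε / 2 * (1 / ρ + 1) := by gcongr
    _ = η := by rw [hε]; field_simp

theorem IsSimpleInvariantVal.eventually_restrictTop_le (hZ : IsSimpleInvariantVal Z)
    (husc : TauUSC Z) (hρ : 0 < ρ)
    (hg : ∀ ε > 0, ∀ᶠ h in 𝓝[>] 0, LipConvexOn (ε * h).toNNReal g (Set.Icc (-h) h)) :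
    ∀ᶠ h in 𝓝[>] 0, Z (restrictTop g (Set.Icc (-h) h)) ≤ ρ * (2 * h) := by
  by_contra hcon
  have hlarge : ∃ᶠ h in 𝓝[>] 0, ρ * (2 * h) < Z (restrictTop g (Set.Icc (-h) h)) := by
    simpa only [not_eventually, not_le] using hcon
  obtain ⟨r, hlip, hr⟩ := ((hg 1 one_pos).and self_mem_nhdsWithin).exists
  choose h hh G hG hG₀ hG_left hZ_ge hZ_le using fun k : ℕ =>
    hZ.exists_one_le_of_frequently hρ hg hlarge hr (Nat.one_div_pos_of_nat (α := ℝ) (n := k))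
  have hG_one (k : ℕ) : LipConvexOn 1 (G k) Set.univ := by
    refine (hG k).weaken (Real.toNNReal_le_one.2 ?_)
    exact (div_le_one k.cast_add_one_pos).2 (le_add_of_nonneg_left k.cast_nonneg)
  have hlim (t : ℝ) : Tendsto (G · t) atTop (𝓝 0) := by
    refine squeeze_zero_norm (a := fun k : ℕ => 1 / ((k : ℝ) + 1) * ‖t‖) (fun k => ?_) ?_
    · have hdist :=
        (hG k).lipschitzOnWith.dist_le_mul t (Set.mem_univ t) 0 (Set.mem_univ 0)
      rwa [Real.coe_toNNReal _ Nat.one_div_pos_of_nat.le, hG₀, dist_zero_right,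
        dist_zero_right] at hdist
    · simpa using tendsto_one_div_add_atTop_nhds_zero_nat.mul_const ‖t‖
  have hcontra {K : ℝ≥0} {B : ℝ → ℝ} {a b : ℝ} (hab : a ≤ b) (hB : LipConvexOn K B (Set.Icc a b))
      (hbdd : BddAbove (Set.range fun k => Z (restrictTop (G k) (Set.Icc 0 (1 / ρ + 1)))) ∨
        Z (restrictTop B (Set.Icc a b)) < 0) : False :=
    one_pos.not_ge (hZ.le_zero_of_tendsto_zero husc (by positivity) hG_one hG_left hlim hZ_ge hab
      hB hbdd)
  -- Either some piece has a negative value and serves as `B`, or `Z` is monotone in the interval,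
  -- which bounds `Z (G k)`.
  by_cases hneg : ∃ a b, a ≤ b ∧ LipConvexOn (1 * r).toNNReal g (Set.Icc a b) ∧
      Z (restrictTop g (Set.Icc a b)) < 0
  · obtain ⟨a, b, hab, hB, hBneg⟩ := hneg
    exact hcontra hab hB (.inr hBneg)
  · push Not at hneg
    refine hcontra le_rfl (LipConvexOn.const (convex_Icc 0 0) 0) (.inl ?_)
    refine ⟨1 + Z (restrictTop g (Set.Icc (-r) r)), Set.forall_mem_range.2 fun k => ?_⟩
    refine (hZ_le k).trans (add_le_add_right ?_ 1)
    have hkr : h k ≤ r := (hh k).2.le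
    have hk₀ : 0 < h k := (hh k).1
    exact hZ.restrictTop_Icc_mono hlip (by linarith) (by linarith) hkr hneg

end SmallLipschitz

section SupportTriangle

variable {f : ℝ → ℝ} {A : Set ℝ} {c d s₁ s₂ t x y z : ℝ}

lemma exists_add_mul_sub_le_of_mem_interior (hf : ConvexOn ℝ A f) (hx : x ∈ interior A) :
    ∃ s, ∀ t ∈ A, f x + s * (t - x) ≤ f t := by
  refine ⟨derivWithin f (Set.Ioi x) x, fun t ht => ?_⟩
  rcases lt_trichotomy t x with htx | rfl | hxt
  · have hslope := (hf.slope_le_leftDeriv_of_mem_interior ht hx htx).trans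
      (hf.leftDeriv_le_rightDeriv_of_mem_interior hx)
    rw [slope_def_field, div_le_iff₀ (sub_pos.2 htx)] at hslope
    linarith
  · simp
  · have hslope := hf.rightDeriv_le_slope_of_mem_interior hx ht hxt
    rw [slope_def_field, le_div_iff₀ (sub_pos.2 hxt)] at hslope
    linarith

/-- The maximum of the lines of slopes `s₁` and `s₂` through `(c, d)`. It replaces `u` as `v_T` when
these lines support `u`. -/
def wedge (c d s₁ s₂ t : ℝ) : ℝ := max (d + s₁ * (t - c)) (d + s₂ * (t - c))

/-- The triangle bounded by the graph of a wedge over `[x, y]` and by its chord. -/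
def wedgeTriangle (c d s₁ s₂ x y : ℝ) : Set (ℝ × ℝ) :=
  convexHull ℝ {(x, wedge c d s₁ s₂ x), (y, wedge c d s₁ s₂ y), (c, d)}

lemma wedge_of_le (hs : s₁ ≤ s₂) (ht : t ≤ c) : wedge c d s₁ s₂ t = d + s₁ * (t - c) :=
  max_eq_left (add_le_add_right (mul_le_mul_of_nonpos_right hs (sub_nonpos.2 ht)) d)

lemma wedge_of_ge (hs : s₁ ≤ s₂) (ht : c ≤ t) : wedge c d s₁ s₂ t = d + s₂ * (t - c) :=
  max_eq_right (add_le_add_right (mul_le_mul_of_nonneg_right hs (sub_nonneg.2 ht)) d)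

lemma affineOn_wedge_Iic (hs : s₁ ≤ s₂) : AffineOn (wedge c d s₁ s₂) (Set.Iic c) :=
  .of_eq_mul_add s₁ (d - s₁ * c) fun t ht => by rw [wedge_of_le hs ht]; ring

lemma affineOn_wedge_Ici (hs : s₁ ≤ s₂) : AffineOn (wedge c d s₁ s₂) (Set.Ici c) :=
  .of_eq_mul_add s₂ (d - s₂ * c) fun t ht => by rw [wedge_of_ge hs ht]; ring

lemma lipConvexOn_add_mul_sub (c d s : ℝ) :
    LipConvexOn ‖s‖₊ (fun t => d + s * (t - c)) Set.univ := by
  refine ⟨⟨convex_univ, fun x _ y _ α β _ _ hαβ => le_of_eq ?_⟩,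
    (LipschitzWith.of_dist_le_mul fun x y => le_of_eq ?_).lipschitzOnWith⟩
  · simp only [smul_eq_mul]
    linear_combination (s * c - d) * hαβ
  · rw [Real.dist_eq, Real.dist_eq, coe_nnnorm, Real.norm_eq_abs, ← abs_mul]
    ring_nf

lemma lipConvexOn_wedge (c d s₁ s₂ : ℝ) :
    LipConvexOn (max ‖s₁‖₊ ‖s₂‖₊) (wedge c d s₁ s₂) Set.univ :=
  have h₁ := lipConvexOn_add_mul_sub c d s₁
  have h₂ := lipConvexOn_add_mul_sub c d s₂
  ⟨h₁.convexOn.sup h₂.convexOn,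
    ((lipschitzOnWith_univ.1 h₁.lipschitzOnWith).max
      (lipschitzOnWith_univ.1 h₂.lipschitzOnWith)).lipschitzOnWith⟩

lemma isPLQ_restrictTop_wedge (hs : s₁ ≤ s₂) (hxc : x ≤ c) (hcy : c ≤ y) :
    IsPLQ (restrictTop (wedge c d s₁ s₂) (Set.Icc x y)) := by
  refine ⟨isLC_restrictTop ((lipConvexOn_wedge c d s₁ s₂).mono (Set.subset_univ _) (convex_Icc x y))
    isCompact_Icc (Set.nonempty_Icc.2 (hxc.trans hcy)), 1, ![x, c], ![c, y],
    Fin.forall_fin_two.2 ⟨hxc, hcy⟩, ?_, Fin.forall_fin_two.2 ⟨?_, ?_⟩⟩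
  · rw [edom_restrictTop, ← Set.Icc_union_Icc_eq_Icc hxc hcy]
    ext t
    simp [Fin.exists_fin_two]
  · refine ⟨0, s₁, d - s₁ * c, fun t (ht : t ∈ Set.Icc x c) => ?_⟩
    rw [toReal_restrictTop (Set.Icc_subset_Icc_right hcy ht), wedge_of_le hs ht.2]
    ring
  · refine ⟨0, s₂, d - s₂ * c, fun t (ht : t ∈ Set.Icc c y) => ?_⟩
    rw [toReal_restrictTop (Set.Icc_subset_Icc_left hxc ht), wedge_of_ge hs ht.1]
    ring

lemma IsSimpleInvariantVal.restrictTop_wedge {Z : (ℝ → EReal) → ℝ} (hZ : IsSimpleInvariantVal Z)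
    (hs : s₁ ≤ s₂) (hxc : x ≤ c) (hcy : c ≤ y) :
    Z (restrictTop (wedge c d s₁ s₂) (Set.Icc x y)) = 0 := by
  rw [← hZ.restrictTop_Icc_add_Icc ((lipConvexOn_wedge c d s₁ s₂).mono (Set.subset_univ _)
      (convex_Icc x y)) hxc hcy,
    hZ.restrictTop_Icc_of_affineOn hxc ((affineOn_wedge_Iic hs).mono Set.Icc_subset_Iic_self),
    hZ.restrictTop_Icc_of_affineOn hcy ((affineOn_wedge_Ici hs).mono Set.Icc_subset_Ici_self),
    add_zero]

lemma exists_wedge_le (hf : ConvexOn ℝ A f) (hx : x ∈ interior A) (hy : y ∈ interior A)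
    (hxy : x < y) :
    ∃ c ∈ Set.Icc x y, ∃ d s₁ s₂, s₁ ≤ s₂ ∧ (∀ t ∈ A, wedge c d s₁ s₂ t ≤ f t) ∧
      wedge c d s₁ s₂ x = f x ∧ wedge c d s₁ s₂ y = f y := by
  obtain ⟨s₁, h₁⟩ := exists_add_mul_sub_le_of_mem_interior hf hx
  obtain ⟨s₂, h₂⟩ := exists_add_mul_sub_le_of_mem_interior hf hy
  have hx₂ := h₂ x (interior_subset hx)
  have hy₁ := h₁ y (interior_subset hy)
  have hs : s₁ ≤ s₂ := by nlinarith
  obtain ⟨c, hc, hmeet⟩ : ∃ c ∈ Set.Icc x y, f x + s₁ * (c - x) - (f y + s₂ * (c - y)) = 0 := by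
    refine intermediate_value_Icc' hxy.le (by fun_prop) ⟨?_, ?_⟩ <;> linarith
  refine ⟨c, hc, f x + s₁ * (c - x), s₁, s₂, hs, fun t ht => max_le ?_ ?_, ?_, ?_⟩
  · linarith [h₁ t ht]
  · linarith [h₂ t ht]
  · rw [wedge_of_le hs hc.1]; ring
  · rw [wedge_of_ge hs hc.2]; linarith

lemma isSupportTriangle_wedgeTriangle {w : ℝ → EReal} (hs : s₁ ≤ s₂) (hxc : x ≤ c) (hcy : c ≤ y)
    (hxy : x < y) (hx : x ∈ edom w) (hy : y ∈ edom w)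
    (hle : ∀ t ∈ edom w, wedge c d s₁ s₂ t ≤ toRealFn w t)
    (hwx : wedge c d s₁ s₂ x = toRealFn w x) (hwy : wedge c d s₁ s₂ y = toRealFn w y) :
    IsSupportTriangle w x y (wedgeTriangle c d s₁ s₂ x y) := by
  simp only [toRealFn] at hle hwx hwy
  refine ⟨hxy, hx, hy, s₁, s₂, c, d, fun t ht => ?_, fun t ht => ?_, ?_, ?_, ?_⟩
  · grw [← hle t ht, ← hwx, wedge_of_le hs hxc, wedge, ← le_max_left]
    linarith
  · grw [← hle t ht, ← hwy, wedge_of_ge hs hcy, wedge, ← le_max_right]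
    linarith
  · rw [← hwx, wedge_of_le hs hxc]; ring
  · rw [← hwy, wedge_of_ge hs hcy]; ring
  · rw [wedgeTriangle, hwx, hwy]

lemma convex_wedgeTriangle : Convex ℝ (wedgeTriangle c d s₁ s₂ x y) := convex_convexHull ℝ _

lemma left_mem_wedgeTriangle : (x, wedge c d s₁ s₂ x) ∈ wedgeTriangle c d s₁ s₂ x y :=
  subset_convexHull ℝ _ (by simp)

lemma right_mem_wedgeTriangle : (y, wedge c d s₁ s₂ y) ∈ wedgeTriangle c d s₁ s₂ x y :=
  subset_convexHull ℝ _ (by simp)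

lemma apex_mem_wedgeTriangle : (c, d) ∈ wedgeTriangle c d s₁ s₂ x y :=
  subset_convexHull ℝ _ (by simp)

lemma mem_wedgeTriangle_of_wedge (hs : s₁ ≤ s₂) (hz : z ∈ Set.Icc x y) (hc : c ∈ Set.Icc x y) :
    (z, wedge c d s₁ s₂ z) ∈ wedgeTriangle c d s₁ s₂ x y := by
  rcases le_total z c with hzc | hcz
  · obtain ⟨α, β, hα, hβ, hαβ, rfl⟩ := Icc_subset_segment (𝕜 := ℝ) (Set.mem_Icc.2 ⟨hz.1, hzc⟩)
    convert convex_wedgeTriangle left_mem_wedgeTriangle apex_mem_wedgeTriangle hα hβ hαβ using 1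
    rw [wedge_of_le hs hzc, wedge_of_le hs hc.1]
    ext
    · simp
    · simp only [smul_eq_mul, Prod.snd_add, Prod.smul_snd]
      linear_combination (s₁ * c - d) * hαβ
  · obtain ⟨α, β, hα, hβ, hαβ, rfl⟩ := Icc_subset_segment (𝕜 := ℝ) (Set.mem_Icc.2 ⟨hcz, hz.2⟩)
    convert convex_wedgeTriangle apex_mem_wedgeTriangle right_mem_wedgeTriangle hα hβ hαβ using 1
    rw [wedge_of_ge hs hcz, wedge_of_ge hs hc.2]
    ext
    · simp
    · simp only [smul_eq_mul, Prod.snd_add, Prod.smul_snd]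
      linear_combination (s₂ * c - d) * hαβ

lemma mem_wedgeTriangle_of_convexOn (hs : s₁ ≤ s₂) (hc : c ∈ Set.Icc x y)
    (hf : ConvexOn ℝ (Set.Icc x y) f) (hz : z ∈ Set.Icc x y) (hle : wedge c d s₁ s₂ z ≤ f z)
    (hfx : wedge c d s₁ s₂ x = f x) (hfy : wedge c d s₁ s₂ y = f y) :
    (z, f z) ∈ wedgeTriangle c d s₁ s₂ x y := by
  have hxy : x ≤ y := hz.1.trans hz.2
  obtain ⟨α, β, hα, hβ, hαβ, hαβz⟩ := Icc_subset_segment (𝕜 := ℝ) hz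
  have hbelow : (z, wedge c d s₁ s₂ z) ∈ wedgeTriangle c d s₁ s₂ x y :=
    mem_wedgeTriangle_of_wedge hs hz hc
  have hchord : (z, α * f x + β * f y) ∈ wedgeTriangle c d s₁ s₂ x y := by
    convert convex_wedgeTriangle left_mem_wedgeTriangle right_mem_wedgeTriangle hα hβ hαβ using 1
    rw [hfx, hfy, ← hαβz]
    rfl
  have hle_chord : f z ≤ α * f x + β * f y := by
    rw [← hαβz]
    exact hf.2 (Set.left_mem_Icc.2 hxy) (Set.right_mem_Icc.2 hxy) hα hβ hαβ
  refine convex_wedgeTriangle.segment_subset hbelow hchord ?_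
  rw [← Prod.image_mk_segment_right, segment_eq_Icc (hle.trans hle_chord)]
  exact ⟨f z, ⟨hle, hle_chord⟩, rfl⟩

end SupportTriangle

section Main

variable {Z : (ℝ → EReal) → ℝ} {u : ℝ → EReal} {x₀ : ℝ}

lemma IsSimpleInvariantVal.restrictTop_comp_add_sub_affine (hZ : IsSimpleInvariantVal Z)
    {f : ℝ → ℝ} {a b p q : ℝ} {K : ℝ≥0} (hab : a ≤ b)
    (hf : LipConvexOn K (fun t => f (x₀ + t) - q - p * t) (Set.Icc a b)) :
    Z (restrictTop (fun t => f (x₀ + t) - q - p * t) (Set.Icc a b)) =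
      Z (restrictTop f (Set.Icc (x₀ + a) (x₀ + b))) := by
  have hsum : ((fun t => f (x₀ + t) - q - p * t) + fun t => q + p * (t - 0)) =
      fun t => f (x₀ + t) := by
    funext t
    simp only [Pi.add_apply]
    ring
  have hLip := hf.add ((lipConvexOn_add_mul_sub 0 q p).mono (Set.subset_univ _) (convex_Icc a b))
  have haffine : AffineOn (fun t => q + p * (t - 0)) (Set.Icc a b) :=
    .of_eq_mul_add p q fun t _ => by ring
  have hshift := hZ.restrictTop_Icc_comp_sub hab (hsum ▸ hLip) x₀
  simp only [add_sub_cancel] at hshift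
  rw [add_comm x₀ a, add_comm x₀ b, hshift, ← hsum, hZ.dualTransInv.restrictTop_add
    (isLC_restrictTop hf isCompact_Icc (Set.nonempty_Icc.2 hab)) haffine]

lemma IsLC.convexOn_comp_add_sub_affine (hu : IsLC u) (x₀ p q : ℝ) :
    ConvexOn ℝ ((x₀ + ·) ⁻¹' edom u) fun t => toRealFn u (x₀ + t) - q - p * t := by
  have haffine : ConvexOn ℝ Set.univ fun t => -q + -p * (t - 0) :=
    (lipConvexOn_add_mul_sub 0 (-q) (-p)).convexOn
  have hshift := hu.convexOn_toRealFn.translate_right x₀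
  refine (hshift.add (haffine.subset (Set.subset_univ _) hshift.1)).congr fun t _ => ?_
  simp only [Pi.add_apply, Function.comp_apply]
  ring

lemma IsSimpleInvariantVal.exists_isSupportTriangle (hZ : IsSimpleInvariantVal Z) (hu : IsLC u)
    {x y z : ℝ} (hxy : x < y) (hsub : Set.Icc x y ⊆ interior (edom u)) (hz : z ∈ Set.Icc x y) :
    ∃ (T : Set (ℝ × ℝ)) (v : ℝ → EReal), IsSupportTriangle u x y T ∧ (z, (u z).toReal) ∈ T ∧
      IsSupportTriangle v x y T ∧ IsPLQ v ∧ Z v = 0 := by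
  have hx : x ∈ interior (edom u) := hsub (Set.left_mem_Icc.2 hxy.le)
  have hy : y ∈ interior (edom u) := hsub (Set.right_mem_Icc.2 hxy.le)
  have hsub' : Set.Icc x y ⊆ edom u := hsub.trans interior_subset
  obtain ⟨c, hc, d, s₁, s₂, hs, hle, hwx, hwy⟩ :=
    exists_wedge_le hu.convexOn_toRealFn hx hy hxy
  set v := restrictTop (wedge c d s₁ s₂) (Set.Icc x y)
  have hv_dom : edom v = Set.Icc x y := edom_restrictTop _ _
  have hv_eq {t : ℝ} (ht : t ∈ Set.Icc x y) : wedge c d s₁ s₂ t = toRealFn v t :=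
    (toReal_restrictTop ht).symm
  have hxv : x ∈ Set.Icc x y := Set.left_mem_Icc.2 hxy.le
  have hyv : y ∈ Set.Icc x y := Set.right_mem_Icc.2 hxy.le
  exact ⟨wedgeTriangle c d s₁ s₂ x y, v,
    isSupportTriangle_wedgeTriangle hs hc.1 hc.2 hxy (hsub' hxv) (hsub' hyv) hle hwx hwy,
    mem_wedgeTriangle_of_convexOn hs hc (hu.convexOn_toRealFn.subset hsub' (convex_Icc x y)) hz
      (hle z (hsub' hz)) hwx hwy,
    isSupportTriangle_wedgeTriangle hs hc.1 hc.2 hxy (hv_dom ▸ hxv) (hv_dom ▸ hyv)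
      (fun t ht => (hv_eq (hv_dom ▸ ht)).le) (hv_eq hxv) (hv_eq hyv),
    isPLQ_restrictTop_wedge hs hc.1 hc.2, hZ.restrictTop_wedge hs hc.1 hc.2⟩

theorem stmt15_general (hZ : IsSimpleInvariantVal Z) (husc : TauUSC Z) (hu : IsLC u)
    (hx₀ : x₀ ∈ interior (edom u)) {d₁ : ℝ}
    (hTaylor : (fun h : ℝ => (u (x₀ + h)).toReal - (u x₀).toReal - d₁ * h) =o[𝓝 0]
      fun h : ℝ => h ^ 2)
    {ρ : ℝ} (hρ : 0 < ρ) :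
    ∀ᶠ h in 𝓝[>] (0 : ℝ), ∃ (T : Set (ℝ × ℝ)) (v : ℝ → EReal),
      IsSupportTriangle u (x₀ - h) (x₀ + h) T ∧ (x₀, (u x₀).toReal) ∈ T ∧
      IsSupportTriangle v (x₀ - h) (x₀ + h) T ∧ IsPLQ v ∧
      Z (fun t => u t + eIndicator (Set.Icc (x₀ - h) (x₀ + h)) t) ≤ Z v + ρ * (2 * h) := by
  set g : ℝ → ℝ := fun t => toRealFn u (x₀ + t) - toRealFn u x₀ - d₁ * t
  have hdom : (x₀ + ·) ⁻¹' edom u ∈ 𝓝 (0 : ℝ) :=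
    (continuous_const_add x₀).continuousAt.preimage_mem_nhds
      (by simpa using mem_interior_iff_mem_nhds.1 hx₀)
  have hLip (ε : ℝ) (hε : 0 < ε) :
      ∀ᶠ h in 𝓝[>] 0, LipConvexOn (ε * h).toNNReal g (Set.Icc (-h) h) :=
    eventually_lipConvexOn_of_isLittleO_sq hdom (hu.convexOn_comp_add_sub_affine x₀ d₁ _) hTaylor hε
  obtain ⟨r, hr, hball⟩ := Metric.isOpen_iff.1 isOpen_interior x₀ hx₀
  filter_upwards [hZ.eventually_restrictTop_le husc hρ hLip, hLip 1 one_pos,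
    Ioo_mem_nhdsGT hr] with h hle hLip_h ⟨hh, hhr⟩
  have hsub : Set.Icc (x₀ - h) (x₀ + h) ⊆ interior (edom u) := by
    rw [← Real.closedBall_eq_Icc]
    exact (Metric.closedBall_subset_ball hhr).trans hball
  obtain ⟨T, v, hT, hx₀T, hvT, hv, hZv⟩ :=
    hZ.exists_isSupportTriangle hu (z := x₀) (by linarith) hsub ⟨by linarith, by linarith⟩
  refine ⟨T, v, hT, hx₀T, hvT, hv, ?_⟩
  rwa [hZv, zero_add, hu.add_eIndicator (hsub.trans interior_subset), sub_eq_add_neg,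
    ← hZ.restrictTop_comp_add_sub_affine (by linarith) hLip_h]

end Main

/-- Let `Z` be a simple, τ-upper semicontinuous, translation and dually
epi-translation invariant valuation on `LC(ℝ)` vanishing on indicators of closed intervals, and
let `u ∈ LC(ℝ)` with `dom u = [-m,m]`. If `x₀` is an interior point of `dom u` at which `u` is
twice differentiable with `u''(x₀) = 0` (second-order Taylor expansion), then for all
`ρ, δ > 0` there are a support triangle `T = T(x,y)` of `u`, a convex body `S_T ⊆ T` which is a
support triangle of some `v_T ∈ PLQ(ℝ)`, with `(x₀, u x₀) ∈ T`, `0 < y - x < δ` and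
`Z(u + I_{[x,y]}) ≤ Z(v_T) + (ρ/2)(y - x)`. -/
theorem stmt15 (Z : (ℝ → EReal) → ℝ)
    (hval : IsVal Z) (husc : TauUSC Z) (htrans : TransInv Z) (hdual : DualTransInv Z)
    (hsimple : ∀ u : ℝ → EReal, IsLC u → (∃ x : ℝ, edom u = {x}) → Z u = 0)
    (hvanish : ∀ a b : ℝ, a ≤ b → Z (eIndicator (Set.Icc a b)) = 0)
    (m : ℝ) (hm : 0 < m) (u : ℝ → EReal) (hu : IsLC u) (hdom : edom u = Set.Icc (-m) m)
    (x₀ : ℝ) (hx₀ : x₀ ∈ interior (edom u)) (d₁ : ℝ)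
    (hTaylor : (fun h : ℝ =>
        (u (x₀ + h)).toReal - (u x₀).toReal - d₁ * h)
      =o[𝓝 0] fun h : ℝ => h ^ 2)
    (ρ δ : ℝ) (hρ : 0 < ρ) (hδ : 0 < δ) :
    ∃ (x y : ℝ) (T S : Set (ℝ × ℝ)) (v : ℝ → EReal),
      IsSupportTriangle u x y T ∧
      (x₀, (u x₀).toReal) ∈ T ∧ 0 < y - x ∧ y - x < δ ∧
      S ⊆ T ∧ (∃ x' y' : ℝ, IsSupportTriangle v x' y' S) ∧ IsPLQ v ∧
      Z (fun t => u t + eIndicator (Set.Icc x y) t) ≤ Z v + ρ / 2 * (y - x) := by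
  obtain ⟨h, ⟨T, v, hT, hx, hv, hplq, hle⟩, hh, hhδ⟩ :=
    ((stmt15_general ⟨hval, htrans, hdual, hsimple, hvanish⟩ husc hu hx₀ hTaylor
      (half_pos hρ)).and (Ioo_mem_nhdsGT (half_pos hδ))).exists
  exact ⟨x₀ - h, x₀ + h, T, T, v, hT, hx, by linarith, by linarith, subset_rfl, ⟨_, _, hv⟩, hplq,
    hle.trans_eq (by ring)⟩

end
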